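/- arXiv:2510.25408 — 4 statements merged into one kernel-verified Lean document; each statement's English description precedes it below -/
import Mathlib

section
/- Let ψ be a continuously differentiable Orlicz function which is not identically zero, X a real random variable with σ_ψ := ‖X‖_ψ ∈ (0,∞), and suppose E ψ(|X|/σ + 1)² < ∞ for some σ < σ_ψ. Then both (i) E ψ(|X|/σ_ψ)² < ∞ and (ii) E[|X| ψ′(|X|/σ′)] < ∞ for some σ′ < σ_ψ hold. -/
/-!
Claim (i) is domination: `|X|/‖X‖_ψ ≤ |X|/σ + 1` and `ψ` is monotone on `[0,∞)`.

For (ii) take `σ' = σ` and write `t = |X|/σ`. Monotonicity gives `0 ≤ ψ' t` and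
convexity gives `ψ' t ≤ ψ (t + 1) - ψ t ≤ ψ (t + 1)` (`IsOrliczFunction.deriv_le`). Moreover, since a nonzero Orlicz function grows at least linearly,
`t ≤ a + b ψ (t + 1)` (`IsOrliczFunction.exists_le_affine`). Hence `|X| ψ' t` is dominated by a
quadratic polynomial in `ψ (t + 1)`, which is integrable under a probability measure.
-/

open MeasureTheory ProbabilityTheory Filter Set

/-- An Orlicz function: increasing and convex on `[0,∞)` with `ψ 0 = 0` and `ψ x → ∞`. -/
structure IsOrliczFunction (ψ : ℝ → ℝ) : Prop where
  mono : MonotoneOn ψ (Set.Ici 0)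
  convex : ConvexOn ℝ (Set.Ici 0) ψ
  zero : ψ 0 = 0
  tendsto_atTop : Filter.Tendsto ψ Filter.atTop Filter.atTop

/-- The set of admissible constants defining the Orlicz norm of `X`. -/
def orliczSet (ψ : ℝ → ℝ) {Ω : Type*} [MeasurableSpace Ω] (μ : Measure Ω)
    (X : Ω → ℝ) : Set ℝ :=
  {σ : ℝ | 0 < σ ∧ ∫⁻ ω, ENNReal.ofReal (ψ (|X ω| / σ)) ∂μ ≤ 1}

/-- The Orlicz norm `‖X‖_ψ` of a real random variable `X`. -/
noncomputable def orliczNorm (ψ : ℝ → ℝ) {Ω : Type*} [MeasurableSpace Ω] (μ : Measure Ω)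
    (X : Ω → ℝ) : ℝ :=
  sInf (orliczSet ψ μ X)

/-- The empirical Orlicz norm of `x 0, …, x (n-1)`. -/
noncomputable def empOrlicz (ψ : ℝ → ℝ) (n : ℕ) (x : ℕ → ℝ) : ℝ :=
  sInf {σ : ℝ | 0 < σ ∧ (∑ i ∈ Finset.range n, ψ (|x i| / σ)) / n ≤ 1}

theorem IsOrliczFunction.nonneg {ψ : ℝ → ℝ} (hψ : IsOrliczFunction ψ) {t : ℝ} (ht : 0 ≤ t) :
    0 ≤ ψ t := by
  have := hψ.mono (mem_Ici.2 le_rfl) (mem_Ici.2 ht) ht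
  rwa [hψ.zero] at this

theorem IsOrliczFunction.deriv_nonneg {ψ : ℝ → ℝ} (hψ : IsOrliczFunction ψ)
    (hd : Differentiable ℝ ψ) {t : ℝ} (ht : 0 ≤ t) : 0 ≤ deriv ψ t := by
  -- At `t = 0` only the one-sided derivative sees the monotonicity, hence `derivWithin`.
  rw [← (hd t).derivWithin (uniqueDiffOn_Ici (0 : ℝ) t ht)]
  exact hψ.mono.derivWithin_nonneg

theorem IsOrliczFunction.deriv_le {ψ : ℝ → ℝ} (hψ : IsOrliczFunction ψ)
    (hd : Differentiable ℝ ψ) {t : ℝ} (ht : 0 ≤ t) : deriv ψ t ≤ ψ (t + 1) := by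
  have h := hψ.convex.le_slope_of_hasDerivAt (mem_Ici.2 ht)
    (mem_Ici.2 (by linarith : (0 : ℝ) ≤ t + 1)) (by linarith) (hd t).hasDerivAt
  rw [slope_def_field] at h
  have h0 := hψ.nonneg ht
  have h1 : t + 1 - t = 1 := by ring
  rw [h1, div_one] at h
  linarith

theorem IsOrliczFunction.exists_le_affine {ψ : ℝ → ℝ} (hψ : IsOrliczFunction ψ)
    (hne : ∃ x : ℝ, 0 ≤ x ∧ ψ x ≠ 0) :
    ∃ a b : ℝ, 0 ≤ a ∧ 0 ≤ b ∧ ∀ t, 0 ≤ t → t ≤ a + b * ψ t := by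
  obtain ⟨x, hx, hψx⟩ := hne
  have hψpos : 0 < ψ x := lt_of_le_of_ne (hψ.nonneg hx) (Ne.symm hψx)
  refine ⟨x, x / ψ x, hx, by positivity, fun t ht => ?_⟩
  have hb : 0 ≤ x / ψ x * ψ t := mul_nonneg (by positivity) (hψ.nonneg ht)
  rcases le_or_gt t x with h | h
  · linarith
  · -- Convexity on `[0, t]` with `ψ 0 = 0` gives `ψ x ≤ (x / t) ψ t`.
    have htpos : 0 < t := hx.trans_lt h
    have hc := hψ.convex.2 (mem_Ici.2 ht) (mem_Ici.2 (le_refl (0 : ℝ)))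
      (by positivity : 0 ≤ x / t) (sub_nonneg.2 ((div_le_one htpos).2 h.le)) (by ring)
    simp only [smul_eq_mul, mul_zero, add_zero, hψ.zero, div_mul_cancel₀ x htpos.ne'] at hc
    have h1 : t * ψ x ≤ x * ψ t := by
      rw [div_mul_eq_mul_div, le_div_iff₀ htpos] at hc
      linarith
    have h2 : t ≤ x / ψ x * ψ t := by
      rw [div_mul_eq_mul_div, le_div_iff₀ hψpos]
      exact h1
    linarith

/-- Sufficient condition for the moment assumptions of the CLT for the empirical Orlicz
norm: if `E ψ(|X|/σ + 1)² < ∞` for some `0 < σ < σ_ψ`, then both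
(i) `E ψ(|X|/σ_ψ)² < ∞` and (ii) `E |X| ψ'(|X|/σ') < ∞` for some `σ' < σ_ψ`. -/
theorem empirical_orlicz_clt_sufficient
    {Ω : Type*} [MeasurableSpace Ω] {μ : Measure Ω} [IsProbabilityMeasure μ]
    {ψ : ℝ → ℝ} (hψ : IsOrliczFunction ψ) (hψC1 : ContDiff ℝ 1 ψ)
    (hψne : ∃ x : ℝ, 0 ≤ x ∧ ψ x ≠ 0)
    (X0 : Ω → ℝ) (hX0 : Measurable X0)
    (hfin : (orliczSet ψ μ X0).Nonempty)
    (hpos : 0 < orliczNorm ψ μ X0)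
    (hmom : ∃ σ : ℝ, 0 < σ ∧ σ < orliczNorm ψ μ X0 ∧
      Integrable (fun ω => (ψ (|X0 ω| / σ + 1)) ^ 2) μ) :
    Integrable (fun ω => (ψ (|X0 ω| / orliczNorm ψ μ X0)) ^ 2) μ ∧
    ∃ σ' : ℝ, 0 < σ' ∧ σ' < orliczNorm ψ μ X0 ∧
      Integrable (fun ω => |X0 ω| * deriv ψ (|X0 ω| / σ')) μ := by
  obtain ⟨σ, hσ, hσlt, hint⟩ := hmom
  have hψm : Measurable ψ := hψC1.continuous.measurable
  have hd : Differentiable ℝ ψ := hψC1.differentiable one_ne_zero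
  have habs : Measurable fun ω => |X0 ω| := hX0.abs
  refine ⟨?_, σ, hσ, hσlt, ?_⟩
  · refine hint.mono' ((hψm.comp (habs.div_const _)).pow_const 2).aestronglyMeasurable
      (Eventually.of_forall fun ω => ?_)
    have h0 : 0 ≤ |X0 ω| / orliczNorm ψ μ X0 := by positivity
    have hle : |X0 ω| / orliczNorm ψ μ X0 ≤ |X0 ω| / σ + 1 := by
      have : |X0 ω| / orliczNorm ψ μ X0 ≤ |X0 ω| / σ :=
        div_le_div_of_nonneg_left (abs_nonneg _) hσ hσlt.le
      linarith
    rw [Real.norm_of_nonneg (sq_nonneg _)]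
    exact pow_le_pow_left₀ (hψ.nonneg h0)
      (hψ.mono (mem_Ici.2 h0) (mem_Ici.2 (h0.trans hle)) hle) 2
  · obtain ⟨a, b, ha, hb, hab⟩ := hψ.exists_le_affine hψne
    have hdom : Integrable
        (fun ω => σ * a + σ * (a + b) * (ψ (|X0 ω| / σ + 1)) ^ 2) μ :=
      (integrable_const _).add (hint.const_mul _)
    refine hdom.mono' (habs.mul ((measurable_deriv ψ).comp
      (habs.div_const _))).aestronglyMeasurable (Eventually.of_forall fun ω => ?_)
    have ht : 0 ≤ |X0 ω| / σ := by positivity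
    have hX : |X0 ω| = σ * (|X0 ω| / σ) := by field_simp
    rw [Real.norm_of_nonneg (mul_nonneg (abs_nonneg _) (hψ.deriv_nonneg hd ht))]
    generalize |X0 ω| / σ = t at ht hX ⊢
    rw [hX]
    have hp : 0 ≤ ψ (t + 1) := hψ.nonneg (by linarith)
    have hlin : t ≤ a + b * ψ (t + 1) := by
      have := hab (t + 1) (by linarith)
      linarith
    calc σ * t * deriv ψ t
        ≤ σ * (a + b * ψ (t + 1)) * ψ (t + 1) := by
          have := hψ.deriv_le hd ht
          have := hψ.deriv_nonneg hd ht
          gcongr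
      _ = σ * a * ψ (t + 1) + σ * b * ψ (t + 1) ^ 2 := by ring
      _ ≤ σ * a * (1 + ψ (t + 1) ^ 2) + σ * b * ψ (t + 1) ^ 2 := by
          gcongr
          nlinarith [sq_nonneg (ψ (t + 1) - 1)]
      _ = σ * a + σ * (a + b) * ψ (t + 1) ^ 2 := by ring
end

section
/- Let Φ denote the standard Gaussian distribution function. The function L̃(z) := z^{4/3} · 2(1 − Φ(√((8/3) log(z+2)))), defined for z > 0, is slowly varying at infinity: for every a > 0, L̃(az)/L̃(z) → 1 as z → ∞. Equivalently, for X standard Gaussian, P(ψ₂(|X|/√(8/3)) − 1 > z) = z^{−4/3} L̃(z) with L̃ slowly varying. -/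
/-!
With `t = √((8/3) log (z+2))` one has `exp (-t²/2) = (z+2)^(-4/3)`, so the polynomial factor
`z^(4/3)` in `L̃` cancels the exponential decay of the Gaussian tail. Mills' ratio
`(1 - Φ t) ~ φ t / t`, obtained from L'Hôpital's rule (`tendsto_gaussTail_mul_div`), then gives
`L̃ z * t → 2 / √(2π)` (`tendsto_gaussTailSlowVar_mul`). Slow variation of `L̃` thus reduces to
that of `t`, i.e. of `√log`.

The tail identity is a rewriting of the event as `t < |x|`, combined with the symmetry of the
Gaussian law.
-/

open MeasureTheory ProbabilityTheory Filter Set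

/-- `L̃(z) = z^{4/3} · 2(1 − Φ(√((8/3) log(z+2))))`, where `Φ` is the standard
Gaussian distribution function. -/
noncomputable def gaussTailSlowVar (z : ℝ) : ℝ :=
  z ^ ((4 : ℝ) / 3) *
    (2 * (1 - ProbabilityTheory.cdf (gaussianReal 0 1)
      (Real.sqrt ((8 / 3) * Real.log (z + 2)))))

/-- The threshold `√((8/3) log (z+2))` at which the Gaussian tail is evaluated. -/
noncomputable def tailThreshold (z : ℝ) : ℝ := Real.sqrt ((8 / 3) * Real.log (z + 2))

lemma hasDerivAt_gaussTail (t : ℝ) :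
    HasDerivAt (fun t => 1 - cdf (gaussianReal 0 1) t) (-gaussianPDFReal 0 1 t) t := by
  have hpdf : Integrable (gaussianPDFReal 0 1) := integrable_gaussianPDFReal 0 1
  have hcont : Continuous (gaussianPDFReal 0 1) := by
    rw [gaussianPDFReal_def]; fun_prop
  have hcdf : ∀ s, cdf (gaussianReal 0 1) s = ∫ x in Iic s, gaussianPDFReal 0 1 x := by
    intro s
    rw [cdf_eq_real, measureReal_def, gaussianReal_apply_eq_integral 0 one_ne_zero,
      ENNReal.toReal_ofReal]
    exact integral_nonneg fun x => gaussianPDFReal_nonneg 0 1 x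
  have hfun : (fun t => 1 - cdf (gaussianReal 0 1) t) =
      fun t => (1 - cdf (gaussianReal 0 1) 0) - ∫ x in (0 : ℝ)..t, gaussianPDFReal 0 1 x := by
    funext s
    rw [← intervalIntegral.integral_Iic_sub_Iic hpdf.integrableOn hpdf.integrableOn,
      hcdf, hcdf]
    ring
  rw [hfun]
  exact (intervalIntegral.integral_hasDerivAt_right (hcont.intervalIntegrable _ _)
    (hcont.stronglyMeasurableAtFilter _ _) hcont.continuousAt).const_sub _

lemma gaussianPDFReal_std (t : ℝ) :
    gaussianPDFReal 0 1 t = (√(2 * Real.pi))⁻¹ * Real.exp (-t ^ 2 / 2) := by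
  simp [gaussianPDFReal]

lemma hasDerivAt_gaussianPDFReal_std (t : ℝ) :
    HasDerivAt (gaussianPDFReal 0 1) (-t * gaussianPDFReal 0 1 t) t := by
  have hfun : gaussianPDFReal 0 1 = fun t => (√(2 * Real.pi))⁻¹ * Real.exp (-t ^ 2 / 2) :=
    funext gaussianPDFReal_std
  have h : HasDerivAt (fun t : ℝ => -t ^ 2 / 2) (-t) t := by
    refine ((hasDerivAt_pow 2 t).fun_neg.div_const 2).congr_deriv ?_
    norm_num
    ring
  rw [hfun]
  exact (h.exp.const_mul ((√(2 * Real.pi))⁻¹)).congr_deriv (by ring)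

/-- Mills' ratio: the standard Gaussian tail is asymptotic to `φ t / t`. -/
lemma tendsto_gaussTail_mul_div :
    Tendsto (fun t => (1 - cdf (gaussianReal 0 1) t) / (gaussianPDFReal 0 1 t / t))
      atTop (nhds 1) := by
  have hpos : ∀ t, 0 < gaussianPDFReal 0 1 t := fun t => gaussianPDFReal_pos 0 1 t one_ne_zero
  have hg : ∀ᶠ t : ℝ in atTop, HasDerivAt (fun t => gaussianPDFReal 0 1 t / t)
      (-gaussianPDFReal 0 1 t * (1 + 1 / t ^ 2)) t := by
    filter_upwards [eventually_gt_atTop 0] with t ht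
    refine ((hasDerivAt_gaussianPDFReal_std t).fun_div (hasDerivAt_id' t) ht.ne').congr_deriv ?_
    field_simp
    ring
  refine HasDerivAt.lhopital_zero_atTop (Eventually.of_forall hasDerivAt_gaussTail) hg
    ?_ ?_ ?_ ?_
  · filter_upwards with t
    have := hpos t
    have h2 : 0 < 1 + 1 / t ^ 2 := by positivity
    exact mul_ne_zero (neg_ne_zero.2 this.ne') h2.ne'
  · simpa using (tendsto_cdf_atTop (gaussianReal 0 1)).const_sub 1
  -- `φ` is bounded by `(√(2π))⁻¹`, so `φ t / t` vanishes at infinity.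
  · have hb : Tendsto (fun t : ℝ => (√(2 * Real.pi))⁻¹ / t) atTop (nhds 0) :=
      tendsto_const_nhds.div_atTop tendsto_id
    refine squeeze_zero' ?_ ?_ hb
    · filter_upwards [eventually_gt_atTop 0] with t ht
      exact (div_pos (hpos t) ht).le
    · filter_upwards [eventually_gt_atTop 0] with t ht
      gcongr
      rw [gaussianPDFReal_std]
      refine mul_le_of_le_one_right (by positivity) (Real.exp_le_one_iff.2 ?_)
      nlinarith [sq_nonneg t]
  · have h : Tendsto (fun t : ℝ => (1 + 1 / t ^ 2)⁻¹) atTop (nhds 1) := by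
      have h0 : Tendsto (fun t : ℝ => 1 / t ^ 2) atTop (nhds 0) :=
        tendsto_const_nhds.div_atTop (tendsto_pow_atTop two_ne_zero)
      simpa using (h0.const_add 1).inv₀ (by norm_num)
    refine h.congr fun t => ?_
    have := (hpos t).ne'
    have h2 : 1 + 1 / t ^ 2 ≠ 0 := by positivity
    field_simp

lemma tendsto_log_add_two : Tendsto (fun z : ℝ => Real.log (z + 2)) atTop atTop :=
  Real.tendsto_log_atTop.comp (tendsto_atTop_add_const_right _ _ tendsto_id)

lemma tendsto_tailThreshold : Tendsto tailThreshold atTop atTop :=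
  Real.tendsto_sqrt_atTop.comp (tendsto_log_add_two.const_mul_atTop (by norm_num))

lemma tendsto_mul_add_div {a : ℝ} :
    Tendsto (fun z : ℝ => (a * z + 2) / (z + 2)) atTop (nhds a) := by
  have h : Tendsto (fun z : ℝ => (2 - 2 * a) / (z + 2)) atTop (nhds 0) :=
    tendsto_const_nhds.div_atTop (tendsto_atTop_add_const_right _ _ tendsto_id)
  have h' := h.const_add a
  rw [add_zero] at h'
  refine h'.congr' ?_
  filter_upwards [eventually_gt_atTop 0] with z hz
  field_simp
  ring

/-- The threshold is slowly varying: `log (a z + 2)` and `log (z + 2)` differ by a bounded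
amount. -/
lemma tendsto_tailThreshold_div {a : ℝ} (ha : 0 < a) :
    Tendsto (fun z => tailThreshold z / tailThreshold (a * z)) atTop (nhds 1) := by
  have hw : Tendsto (fun z : ℝ => Real.log ((a * z + 2) / (z + 2))) atTop (nhds (Real.log a)) :=
    tendsto_mul_add_div.log ha.ne'
  have h1 := (hw.div_atTop tendsto_log_add_two).const_add 1
  rw [add_zero] at h1
  have h2 := (h1.inv₀ one_ne_zero).sqrt
  rw [inv_one, Real.sqrt_one] at h2
  refine h2.congr' ?_
  filter_upwards [eventually_gt_atTop 0] with z hz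
  have haz : 0 < a * z := mul_pos ha hz
  have hl : 0 < Real.log (z + 2) := Real.log_pos (by linarith)
  have hl' : 0 < Real.log (a * z + 2) := Real.log_pos (by linarith)
  rw [tailThreshold, tailThreshold, ← Real.sqrt_div (by positivity),
    Real.log_div (by positivity) (by positivity)]
  congr 1
  have hne := hl'.ne'
  rw [sub_div, div_self hl.ne', add_sub_cancel, inv_div]
  field_simp

lemma gaussianPDFReal_tailThreshold {z : ℝ} (hz : 0 < z) :
    gaussianPDFReal 0 1 (tailThreshold z) =
      (√(2 * Real.pi))⁻¹ * ((z + 2) ^ ((4 : ℝ) / 3))⁻¹ := by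
  have hl : 0 < Real.log (z + 2) := Real.log_pos (by linarith)
  rw [gaussianPDFReal_std, tailThreshold, Real.sq_sqrt (by positivity),
    Real.rpow_def_of_pos (by positivity), ← Real.exp_neg]
  ring_nf

/-- `L̃ z` is asymptotic to a positive constant divided by the threshold. -/
lemma tendsto_gaussTailSlowVar_mul :
    Tendsto (fun z => gaussTailSlowVar z * tailThreshold z) atTop
      (nhds (2 * (√(2 * Real.pi))⁻¹)) := by
  have hM := tendsto_gaussTail_mul_div.comp tendsto_tailThreshold
  have hr : Tendsto (fun z : ℝ => (z / (z + 2)) ^ ((4 : ℝ) / 3)) atTop (nhds 1) := by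
    have h : Tendsto (fun z : ℝ => z / (z + 2)) atTop (nhds 1) := by
      have h := (tendsto_const_nhds (x := (2 : ℝ))).div_atTop
        (tendsto_atTop_add_const_right atTop (2 : ℝ) tendsto_id)
      have h' := h.const_sub 1
      rw [sub_zero] at h'
      refine h'.congr' ?_
      filter_upwards [eventually_gt_atTop 0] with z hz
      simp only [id]
      field_simp
      ring
    simpa using h.rpow_const (p := (4 : ℝ) / 3) (Or.inl one_ne_zero)
  have h := (hr.mul hM).const_mul (2 * (√(2 * Real.pi))⁻¹)
  rw [mul_one, mul_one] at h
  refine h.congr' ?_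
  filter_upwards [eventually_gt_atTop 0] with z hz
  have hl : 0 < Real.log (z + 2) := Real.log_pos (by linarith)
  have ht : 0 < tailThreshold z := Real.sqrt_pos.2 (by positivity)
  have hp : 0 < (z + 2) ^ ((4 : ℝ) / 3) := by positivity
  have hs : 0 < √(2 * Real.pi) := by positivity
  simp only [Function.comp]
  rw [gaussianPDFReal_tailThreshold hz, Real.div_rpow hz.le (by positivity),
    show gaussTailSlowVar z = z ^ ((4 : ℝ) / 3) *
      (2 * (1 - cdf (gaussianReal 0 1) (tailThreshold z))) from rfl]
  field_simp

lemma gaussTailSlowVar_slowly_varying {a : ℝ} (ha : 0 < a) :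
    Tendsto (fun z => gaussTailSlowVar (a * z) / gaussTailSlowVar z) atTop (nhds 1) := by
  have hc : 2 * (√(2 * Real.pi))⁻¹ ≠ 0 := by positivity
  have haz : Tendsto (fun z : ℝ => a * z) atTop atTop := tendsto_id.const_mul_atTop ha
  have h := ((tendsto_gaussTailSlowVar_mul.comp haz).div tendsto_gaussTailSlowVar_mul hc).mul
    (tendsto_tailThreshold_div ha)
  rw [div_self hc, one_mul] at h
  refine h.congr' ?_
  filter_upwards [tendsto_tailThreshold.eventually_gt_atTop 0,
    (tendsto_tailThreshold.comp haz).eventually_gt_atTop 0] with z h1 h2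
  simp only [Function.comp, Pi.div_apply] at h2 ⊢
  field_simp

/-- Two-sided standard Gaussian tail, by symmetry of the law. -/
lemma gaussianReal_lt_abs {t : ℝ} (ht : 0 ≤ t) :
    gaussianReal 0 1 {x : ℝ | t < |x|} =
      ENNReal.ofReal (2 * (1 - cdf (gaussianReal 0 1) t)) := by
  have hset : {x : ℝ | t < |x|} = Ioi t ∪ Iio (-t) := by
    ext x
    simp only [mem_ofPred_eq, mem_union, mem_Ioi, mem_Iio, lt_abs]
    constructor <;> rintro (h | h) <;> first | exact Or.inl h | exact Or.inr (by linarith)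
  have hdisj : Disjoint (Ioi t) (Iio (-t)) := by
    rw [Set.disjoint_left]
    intro x hx hx'
    simp only [mem_Ioi, mem_Iio] at hx hx'
    linarith
  have hsymm : gaussianReal 0 1 (Iio (-t)) = gaussianReal 0 1 (Ioi t) := by
    have hmap : (gaussianReal 0 1).map (fun x => -x) = gaussianReal 0 1 := by
      rw [gaussianReal_map_neg, neg_zero]
    conv_lhs => rw [← hmap]
    rw [Measure.map_apply measurable_neg measurableSet_Iio]
    congr 1
    ext x
    simp
  have hIoi : gaussianReal 0 1 (Ioi t) = ENNReal.ofReal (1 - cdf (gaussianReal 0 1) t) := by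
    rw [cdf_eq_real, ← probReal_compl_eq_one_sub measurableSet_Iic, compl_Iic,
      ofReal_measureReal]
  rw [hset, measure_union hdisj measurableSet_Iio, hsymm, hIoi, ← two_mul,
    ENNReal.ofReal_mul (by norm_num)]
  simp

/-- `L̃` is slowly varying at infinity, and for a standard Gaussian `X`,
`P(ψ₂(|X|/√(8/3)) − 1 > z) = z^{−4/3} L̃(z)` for every `z > 0`. -/
theorem gaussian_tail_slowly_varying :
    (∀ a : ℝ, 0 < a →
      Tendsto (fun z => gaussTailSlowVar (a * z) / gaussTailSlowVar z) atTop (nhds 1)) ∧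
    (∀ z : ℝ, 0 < z →
      (gaussianReal 0 1) {x : ℝ | z < (Real.exp ((|x| / Real.sqrt (8 / 3)) ^ 2) - 1) - 1} =
        ENNReal.ofReal (z ^ (-(4 : ℝ) / 3) * gaussTailSlowVar z)) := by
  refine ⟨fun a ha => gaussTailSlowVar_slowly_varying ha, fun z hz => ?_⟩
  have hset : {x : ℝ | z < (Real.exp ((|x| / Real.sqrt (8 / 3)) ^ 2) - 1) - 1} =
      {x : ℝ | tailThreshold z < |x|} := by
    have hl : 0 < Real.log (z + 2) := Real.log_pos (by linarith)
    ext x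
    simp only [mem_ofPred_eq]
    rw [tailThreshold, Real.sqrt_lt (by positivity) (abs_nonneg x), div_pow,
      Real.sq_sqrt (by norm_num)]
    have hlog := Real.log_lt_iff_lt_exp (x := z + 2) (y := |x| ^ 2 / (8 / 3)) (by linarith)
    constructor
    · intro h
      have := hlog.2 (by linarith)
      rw [lt_div_iff₀ (by norm_num)] at this
      linarith
    · intro h
      have := hlog.1 (by rw [lt_div_iff₀ (by norm_num)]; linarith)
      linarith
  rw [hset, gaussianReal_lt_abs (t := tailThreshold z) (Real.sqrt_nonneg _), gaussTailSlowVar, ← mul_assoc,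
    ← Real.rpow_add hz]
  norm_num [tailThreshold]
end

section
/- Let Φ⁻¹ denote the standard Gaussian quantile function. Then, as q ↓ 0, (Φ⁻¹(1−q))² − [ log(1/q²) − log log(1/q) + log(1/(4π)) ] → 0; equivalently, Φ⁻¹(1−q) = √( log(1/q²) − log log(1/q) + log(1/(4π)) + o(1) ). -/
/-!
Write `q = 1 - Φ(x)` with `x = Φ⁻¹(1 - q)`; since `Φ` is continuous and stays below `1`, this
is legitimate for `0 < q < 1` and `x → ∞` as `q ↓ 0` (`cdf_gaussQuantile`,
`tendsto_gaussQuantile_atTop`). The Mills ratio asymptotics `q ~ φ(x) / x` (`tendsto_mills`)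
give `log (1 / q²) = x² + 2 log x + log (2π) + o(1)`. In particular `2 log (1 / q) ~ x²`, so
`log log (1 / q) = 2 log x - log 2 + o(1)`, and substituting this to eliminate `log x` is the
expansion (`tendsto_expansion_tail`).
-/


open MeasureTheory ProbabilityTheory Filter Set

/-- The standard Gaussian quantile function `Φ⁻¹`. -/
noncomputable def gaussQuantile (p : ℝ) : ℝ :=
  sInf {x : ℝ | p ≤ ProbabilityTheory.cdf (gaussianReal 0 1) x}

lemma cdf_gaussian_eq (x : ℝ) : cdf (gaussianReal 0 1) x =
    cdf (gaussianReal 0 1) 0 + ∫ t in (0 : ℝ)..x, gaussianPDFReal 0 1 t := by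
  have h : ∀ y, cdf (gaussianReal 0 1) y = ∫ t in Iic y, gaussianPDFReal 0 1 t := by
    intro y
    rw [cdf_eq_real, measureReal_def, gaussianReal_apply_eq_integral _ one_ne_zero,
      ENNReal.toReal_ofReal]
    exact integral_nonneg fun t => gaussianPDFReal_nonneg _ _ _
  have hi := integrable_gaussianPDFReal 0 1
  rw [h, h, ← intervalIntegral.integral_Iic_sub_Iic hi.integrableOn hi.integrableOn]
  ring

lemma continuous_gaussianPDF : Continuous (gaussianPDFReal 0 1) := by
  rw [gaussianPDFReal_def]
  fun_prop

lemma hasDerivAt_cdf_gaussian (x : ℝ) :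
    HasDerivAt (cdf (gaussianReal 0 1)) (gaussianPDFReal 0 1 x) x := by
  have h := (continuous_gaussianPDF.integral_hasStrictDerivAt 0 x).hasDerivAt.const_add
    (cdf (gaussianReal 0 1) 0)
  exact h.congr_of_eventuallyEq (Eventually.of_forall cdf_gaussian_eq)

lemma stdGaussianPDF_pos (x : ℝ) : 0 < gaussianPDFReal 0 1 x :=
  gaussianPDFReal_pos _ _ _ one_ne_zero

lemma continuous_cdf_gaussian : Continuous (cdf (gaussianReal 0 1)) :=
  continuous_iff_continuousAt.2 fun x => (hasDerivAt_cdf_gaussian x).continuousAt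

lemma cdf_gaussian_lt_one (x : ℝ) : cdf (gaussianReal 0 1) x < 1 := by
  have hs : StrictMono (cdf (gaussianReal 0 1)) := strictMono_of_deriv_pos fun x => by
    rw [(hasDerivAt_cdf_gaussian x).deriv]
    exact stdGaussianPDF_pos x
  exact (hs (lt_add_one x)).trans_le (cdf_le_one _ _)

/-- Continuity of `Φ` makes the generalized inverse `gaussQuantile` a genuine right inverse. -/
lemma cdf_gaussQuantile {p : ℝ} (h0 : 0 < p) (h1 : p < 1) :
    cdf (gaussianReal 0 1) (gaussQuantile p) = p := by
  obtain ⟨a, ha⟩ := ((tendsto_cdf_atBot (gaussianReal 0 1)).eventually_lt_const h0).exists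
  obtain ⟨b, hb⟩ := ((tendsto_cdf_atTop (gaussianReal 0 1)).eventually_const_lt h1).exists
  obtain ⟨c, hc⟩ := mem_range_of_exists_le_of_exists_ge continuous_cdf_gaussian
    ⟨a, ha.le⟩ ⟨b, hb.le⟩
  have hbdd : BddBelow {x : ℝ | p ≤ cdf (gaussianReal 0 1) x} := by
    refine ⟨a, fun x hx => ?_⟩
    by_contra! hlt
    have := monotone_cdf (gaussianReal 0 1) hlt.le
    have hx' : p ≤ cdf (gaussianReal 0 1) x := hx
    linarith
  apply le_antisymm
  · calc cdf (gaussianReal 0 1) (gaussQuantile p) ≤ cdf (gaussianReal 0 1) c :=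
          monotone_cdf _ (csInf_le hbdd hc.ge)
      _ = p := hc
  · exact (isClosed_le continuous_const continuous_cdf_gaussian).csInf_mem ⟨c, hc.ge⟩ hbdd

lemma tendsto_gaussQuantile_atTop :
    Tendsto (fun q : ℝ => gaussQuantile (1 - q)) (nhdsWithin 0 (Ioi 0)) atTop := by
  refine tendsto_atTop.2 fun M => ?_
  have hM : 0 < 1 - cdf (gaussianReal 0 1) M := sub_pos.2 (cdf_gaussian_lt_one M)
  filter_upwards [Ioo_mem_nhdsGT (lt_min hM one_pos)] with q hq
  obtain ⟨hq0, hq1⟩ := hq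
  rw [lt_min_iff] at hq1
  by_contra! hlt
  have h := monotone_cdf (gaussianReal 0 1) hlt.le
  rw [cdf_gaussQuantile (by linarith) (by linarith)] at h
  linarith

lemma hasDerivAt_gaussianPDF (x : ℝ) :
    HasDerivAt (gaussianPDFReal 0 1) (-x * gaussianPDFReal 0 1 x) x := by
  have h1 : HasDerivAt (fun x : ℝ => -(x - 0) ^ 2 / (2 * ((1 : NNReal) : ℝ))) (-x) x := by
    have h := ((((hasDerivAt_id x).sub_const 0).pow 2).neg).div_const (2 * ((1 : NNReal) : ℝ))
    refine h.congr_deriv ?_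
    simp
    ring
  have h2 := h1.exp.const_mul ((√(2 * Real.pi * (1 : NNReal)))⁻¹)
  rw [gaussianPDFReal_def]
  refine h2.congr_deriv ?_
  ring

/-- The Mills ratio asymptotics `1 - Φ(x) ~ φ(x) / x`, by L'Hôpital's rule:
`(φ(x) / x)' = -φ(x) (1 + 1 / x²)`. -/
lemma tendsto_mills : Tendsto (fun x : ℝ =>
    (1 - cdf (gaussianReal 0 1) x) / (gaussianPDFReal 0 1 x / x)) atTop (nhds 1) := by
  have hinv : Tendsto (fun x : ℝ => x⁻¹) atTop (nhds 0) := tendsto_inv_atTop_zero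
  have hbound : Tendsto (fun x : ℝ => gaussianPDFReal 0 1 x / x) atTop (nhds 0) := by
    refine squeeze_zero' (g := fun x : ℝ => (√(2 * Real.pi))⁻¹ * x⁻¹) ?_ ?_ ?_
    · filter_upwards [eventually_gt_atTop 0] with x hx
      exact (div_pos (stdGaussianPDF_pos x) hx).le
    · filter_upwards [eventually_gt_atTop 0] with x hx
      rw [div_eq_mul_inv]
      gcongr
      simp only [gaussianPDFReal, NNReal.coe_one, mul_one]
      refine mul_le_of_le_one_right (by positivity) (Real.exp_le_one_iff.2 ?_)
      have := sq_nonneg (x - 0)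
      linarith
    · simpa using hinv.const_mul (√(2 * Real.pi))⁻¹
  refine HasDerivAt.lhopital_zero_atTop
    (f' := fun x => -gaussianPDFReal 0 1 x)
    (g' := fun x => (-x * gaussianPDFReal 0 1 x * x - gaussianPDFReal 0 1 x * 1) / x ^ 2)
    ?_ ?_ ?_ ?_ hbound ?_
  · exact Eventually.of_forall fun x => (hasDerivAt_cdf_gaussian x).const_sub 1
  · filter_upwards [eventually_gt_atTop 0] with x hx
    exact (hasDerivAt_gaussianPDF x).div (hasDerivAt_id x) hx.ne'
  · filter_upwards [eventually_gt_atTop 0] with x hx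
    have hp := stdGaussianPDF_pos x
    refine (div_neg_of_neg_of_pos ?_ (by positivity)).ne
    have : 0 < x * gaussianPDFReal 0 1 x * x := by positivity
    linarith
  · simpa using (tendsto_cdf_atTop (gaussianReal 0 1)).const_sub 1
  · have h : Tendsto (fun x : ℝ => (1 + x⁻¹ ^ 2)⁻¹) atTop (nhds 1) := by
      have := ((hinv.pow 2).const_add 1).inv₀ (by norm_num)
      simpa using this
    refine h.congr' ?_
    filter_upwards [eventually_gt_atTop 0] with x hx
    have hp := (stdGaussianPDF_pos x).ne'
    have h1 : -x * gaussianPDFReal 0 1 x * x - gaussianPDFReal 0 1 x * 1 =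
      -gaussianPDFReal 0 1 x * (x ^ 2 + 1) := by ring
    rw [h1]
    field_simp

lemma log_gaussianPDF (x : ℝ) : Real.log (gaussianPDFReal 0 1 x) =
    -x ^ 2 / 2 - Real.log (2 * Real.pi) / 2 := by
  simp only [gaussianPDFReal, NNReal.coe_one, mul_one, sub_zero]
  rw [Real.log_mul (by positivity) (Real.exp_pos _).ne', Real.log_exp, Real.log_inv,
    Real.log_sqrt (by positivity)]
  ring

/-- The expansion read along `q = 1 - Φ(x)`, `x → ∞`. With `R = (1 - Φ(x)) x / φ(x)` and
`L = log (1 / q)`, the quantity equals `2 log R + log (2 L / x²)`, where `R → 1` and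
`2 L / x² → 1`. -/
lemma tendsto_expansion_tail : Tendsto (fun x : ℝ => x ^ 2 -
    (Real.log (1 / (1 - cdf (gaussianReal 0 1) x) ^ 2)
      - Real.log (Real.log (1 / (1 - cdf (gaussianReal 0 1) x)))
      + Real.log (1 / (4 * Real.pi)))) atTop (nhds 0) := by
  set R : ℝ → ℝ := fun x =>
    (1 - cdf (gaussianReal 0 1) x) / (gaussianPDFReal 0 1 x / x) with hR
  have hlogR : Tendsto (fun x => Real.log (R x)) atTop (nhds 0) := by
    simpa using tendsto_mills.log one_ne_zero
  have hinv : Tendsto (fun x : ℝ => x⁻¹) atTop (nhds 0) := tendsto_inv_atTop_zero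
  have hlogx : Tendsto (fun x : ℝ => Real.log x / x) atTop (nhds 0) :=
    Real.isLittleO_log_id_atTop.tendsto_div_nhds_zero
  have hlogT : ∀ x : ℝ, 0 < x → Real.log (1 - cdf (gaussianReal 0 1) x) =
      Real.log (R x) - Real.log x - x ^ 2 / 2 - Real.log (2 * Real.pi) / 2 := by
    intro x hx
    have hT : 0 < 1 - cdf (gaussianReal 0 1) x := sub_pos.2 (cdf_gaussian_lt_one x)
    have hp := stdGaussianPDF_pos x
    rw [hR]
    simp only
    rw [Real.log_div hT.ne' (div_pos hp hx).ne', Real.log_div hp.ne' hx.ne', log_gaussianPDF]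
    ring
  set S : ℝ → ℝ := fun x => -2 * Real.log (1 - cdf (gaussianReal 0 1) x) / x ^ 2 with hS
  have hSlim : Tendsto S atTop (nhds 1) := by
    have h : Tendsto (fun x : ℝ => 1 + 2 * (Real.log x / x) * x⁻¹
        + Real.log (2 * Real.pi) * x⁻¹ ^ 2 - 2 * Real.log (R x) * x⁻¹ ^ 2) atTop (nhds 1) := by
      have := ((((hlogx.const_mul 2).mul hinv).const_add 1).add
        ((hinv.pow 2).const_mul (Real.log (2 * Real.pi)))).sub
        ((hlogR.const_mul 2).mul (hinv.pow 2))
      simpa using this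
    refine h.congr' ?_
    filter_upwards [eventually_gt_atTop 0] with x hx
    rw [hS]
    simp only
    rw [hlogT x hx]
    field_simp
    ring
  have hlogS : Tendsto (fun x => Real.log (S x)) atTop (nhds 0) := by
    simpa using hSlim.log one_ne_zero
  have hsum : Tendsto (fun x => 2 * Real.log (R x) + Real.log (S x)) atTop (nhds 0) := by
    simpa using (hlogR.const_mul 2).add hlogS
  refine hsum.congr' ?_
  filter_upwards [eventually_gt_atTop 0, hSlim.eventually_const_lt one_pos] with x hx hSx
  have hL : 0 < -Real.log (1 - cdf (gaussianReal 0 1) x) := by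
    have hx2 : 0 < x ^ 2 := by positivity
    have := (div_pos_iff_of_pos_right hx2).1 hSx
    linarith
  have hlogSx : Real.log (S x) = Real.log 2 +
      Real.log (-Real.log (1 - cdf (gaussianReal 0 1) x)) - 2 * Real.log x := by
    have : S x = 2 * (-Real.log (1 - cdf (gaussianReal 0 1) x)) / x ^ 2 := by
      rw [hS]
      ring
    rw [this, Real.log_div (by positivity) (by positivity), Real.log_mul two_ne_zero hL.ne',
      Real.log_pow]
    norm_num
  have h4 : Real.log (4 * Real.pi) = Real.log 2 + Real.log (2 * Real.pi) := by
    rw [← Real.log_mul two_ne_zero (by positivity)]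
    ring_nf
  have hlogTx := hlogT x hx
  simp only [one_div, Real.log_inv, Real.log_pow, Nat.cast_ofNat]
  rw [hlogSx, h4]
  linarith

/-- Asymptotic expansion of Gaussian quantiles:
`(Φ⁻¹(1−q))² − [log(1/q²) − log log(1/q) + log(1/(4π))] → 0` as `q ↓ 0`. -/
theorem gaussian_quantile_expansion :
    Tendsto (fun q : ℝ =>
        (gaussQuantile (1 - q)) ^ 2 -
          (Real.log (1 / q ^ 2) - Real.log (Real.log (1 / q)) + Real.log (1 / (4 * Real.pi))))
      (nhdsWithin 0 (Set.Ioi 0)) (nhds 0) := by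
  refine (tendsto_expansion_tail.comp tendsto_gaussQuantile_atTop).congr' ?_
  filter_upwards [Ioo_mem_nhdsGT (one_pos (α := ℝ))] with q hq
  simp only [Function.comp_apply]
  rw [cdf_gaussQuantile (by linarith [hq.2]) (by linarith [hq.1]), sub_sub_cancel]
end

section
/- Let X be standard Gaussian, Z = exp(X²/(8/3)) − 2 (so that E Z = 0), and a_n = exp( (3/8) (Φ⁻¹(1 − 1/(2n)))² ) − 2, where Φ⁻¹ is the standard Gaussian quantile function. Then n · E[ Z · 1(|Z| > a_n) ] / a_n → 4 as n → ∞; equivalently, the truncated-mean centering b_n = n E[ Z · 1(|Z| ≤ a_n) ] satisfies b_n = −4 a_n (1 + o(1)). -/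
/-!
With `T_c(t) = ∫_t^∞ exp(-c x²) dx`, L'Hôpital's rule gives the Mills-ratio asymptotics
`t exp(c t²) T_c(t) → 1/(2c)` (`tendsto_mills`).

Let `t = Φ⁻¹(1 − 1/(2n))`. Continuity of `Φ` gives `1/(2n) = T_{1/2}(t)/√(2π)`, and `t → ∞` with `n`.
As soon as `a_n = exp(3t²/8) − 2 ≥ 1`, the event `|Z| > a_n` is `|X| > t`, because `Z ≥ -1`. Hence
`E[Z 1(|Z| > a_n)] = 2 (T_{1/8}(t) − 2 T_{1/2}(t)) / √(2π)`: multiplying `exp(3x²/8)` by the Gaussian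
density leaves `exp(-x²/8)`. Therefore
`n E[Z 1(|Z| > a_n)] / a_n = (T_{1/8}(t)/T_{1/2}(t) − 2) / (exp(3t²/8) − 2)`,
and the Mills asymptotics for `c = 1/8` and `c = 1/2` say that `T_{1/8}/T_{1/2} ~ 4 exp(3t²/8)`,
so the limit is `4`. The second claim follows from the first and `E Z = 0`.
-/

open MeasureTheory ProbabilityTheory Filter Set

/-- `a_n = exp((3/8)(Φ⁻¹(1 − 1/(2n)))²) − 2`. -/
noncomputable def truncLevel (n : ℕ) : ℝ :=
  Real.exp ((3 / 8) * (gaussQuantile (1 - 1 / (2 * (n : ℝ)))) ^ 2) - 2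

/-! ### Tail integrals and the Mills ratio -/

/-- The Gaussian-type tail integral `∫_t^∞ exp(-c x²) dx`. -/
noncomputable def gaussTail (c t : ℝ) : ℝ := ∫ x in Ioi t, Real.exp (-c * x ^ 2)

lemma gaussTail_eq {c : ℝ} (hc : 0 < c) (t : ℝ) :
    gaussTail c t = gaussTail c 0 - ∫ x in (0 : ℝ)..t, Real.exp (-c * x ^ 2) := by
  have h := integrable_exp_neg_mul_sq hc
  rw [gaussTail, gaussTail, ← intervalIntegral.integral_Ioi_sub_Ioi' h.integrableOn h.integrableOn]
  ring

lemma hasDerivAt_gaussTail_s16 {c : ℝ} (hc : 0 < c) (t : ℝ) :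
    HasDerivAt (gaussTail c) (-Real.exp (-c * t ^ 2)) t := by
  have hcont : Continuous fun x : ℝ => Real.exp (-c * x ^ 2) := by fun_prop
  have h := (hcont.integral_hasStrictDerivAt 0 t).hasDerivAt.const_sub (gaussTail c 0)
  exact h.congr_of_eventuallyEq (Eventually.of_forall fun x => gaussTail_eq hc x)

lemma tendsto_gaussTail {c : ℝ} (hc : 0 < c) : Tendsto (gaussTail c) atTop (nhds 0) := by
  have h := intervalIntegral_tendsto_integral_Ioi (μ := volume) 0
    (integrable_exp_neg_mul_sq hc).integrableOn tendsto_id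
  have h2 := h.const_sub (gaussTail c 0)
  rw [show gaussTail c 0 - ∫ x in Ioi (0 : ℝ), Real.exp (-c * x ^ 2) = 0 from sub_self _] at h2
  exact h2.congr fun x => (gaussTail_eq hc x).symm

lemma gaussTail_pos {c : ℝ} (hc : 0 < c) (t : ℝ) : 0 < gaussTail c t := by
  have hs : StrictAnti (gaussTail c) := strictAnti_of_hasDerivAt_neg
    (fun x => hasDerivAt_gaussTail_s16 hc x) (fun x => neg_lt_zero.2 (Real.exp_pos _))
  have h1 : 0 ≤ gaussTail c (t + 1) := integral_nonneg fun x => (Real.exp_pos _).le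
  exact h1.trans_lt (hs (by linarith))

lemma tendsto_exp_neg_mul_sq {c : ℝ} (hc : 0 < c) :
    Tendsto (fun t : ℝ => Real.exp (-c * t ^ 2)) atTop (nhds 0) := by
  refine Real.tendsto_exp_atBot.comp ?_
  exact (tendsto_pow_atTop two_ne_zero).const_mul_atTop_of_neg (neg_lt_zero.2 hc)

/-- Mills-ratio asymptotics, from L'Hôpital's rule applied to the tail and `exp(-c t²) / t`. -/
lemma tendsto_mills_s16 {c : ℝ} (hc : 0 < c) :
    Tendsto (fun t => t * Real.exp (c * t ^ 2) * gaussTail c t) atTop (nhds (1 / (2 * c))) := by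
  have key : Tendsto (fun t => gaussTail c t / (Real.exp (-c * t ^ 2) * t⁻¹)) atTop
      (nhds (1 / (2 * c))) := by
    refine HasDerivAt.lhopital_zero_atTop
      (f' := fun t => -Real.exp (-c * t ^ 2))
      (g' := fun t => -Real.exp (-c * t ^ 2) * (2 * c + (t ^ 2)⁻¹))
      (Eventually.of_forall fun t => hasDerivAt_gaussTail_s16 hc t) ?_ ?_ (tendsto_gaussTail hc) ?_ ?_
    · filter_upwards [eventually_gt_atTop 0] with t ht
      have h1 : HasDerivAt (fun t : ℝ => -c * t ^ 2) (-c * (2 * t)) t := by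
        simpa using (hasDerivAt_pow 2 t).const_mul (-c)
      refine (h1.exp.mul (hasDerivAt_inv ht.ne')).congr_deriv ?_
      have ht0 := ht.ne'
      field_simp
      ring
    · filter_upwards [eventually_gt_atTop 0] with t ht
      have := Real.exp_pos (-c * t ^ 2)
      have h2 : 0 < 2 * c + (t ^ 2)⁻¹ := by positivity
      exact mul_ne_zero (by linarith) h2.ne'
    · simpa using (tendsto_exp_neg_mul_sq hc).mul tendsto_inv_atTop_zero
    · have h : Tendsto (fun t : ℝ => (2 * c + (t ^ 2)⁻¹)⁻¹) atTop (nhds ((2 * c + 0)⁻¹)) :=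
        ((tendsto_inv_atTop_zero.comp (tendsto_pow_atTop two_ne_zero)).const_add (2 * c)).inv₀
          (by positivity)
      rw [add_zero, ← one_div] at h
      refine h.congr fun t => ?_
      have := Real.exp_pos (-c * t ^ 2)
      rw [div_mul_eq_div_div, div_self (by linarith), one_div]
  refine key.congr fun t => ?_
  rw [neg_mul, Real.exp_neg, div_eq_mul_inv, mul_inv, inv_inv, inv_inv]
  ring

/-! ### The Gaussian distribution function and its quantiles -/

/-- Expectation under the standard Gaussian law as a Lebesgue integral. -/
lemma integral_std_gaussian (f : ℝ → ℝ) :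
    ∫ x, f x ∂(gaussianReal 0 1) =
      (√(2 * Real.pi))⁻¹ * ∫ x, Real.exp (-(1 / 2) * x ^ 2) * f x := by
  rw [integral_gaussianReal_eq_integral_smul one_ne_zero, ← integral_const_mul]
  congr 1 with x
  simp only [gaussianPDFReal, smul_eq_mul, NNReal.coe_one, mul_one, sub_zero]
  rw [mul_assoc, show -x ^ 2 / 2 = -(1 / 2) * x ^ 2 by ring]

lemma cdf_std_gaussian (t : ℝ) :
    cdf (gaussianReal 0 1) t = 1 - (√(2 * Real.pi))⁻¹ * gaussTail (1 / 2) t := by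
  have h : (gaussianReal 0 1).real (Ioi t) = (√(2 * Real.pi))⁻¹ * gaussTail (1 / 2) t := by
    rw [← integral_indicator_one measurableSet_Ioi, integral_std_gaussian, gaussTail,
      ← integral_indicator measurableSet_Ioi]
    congr 2 with x
    by_cases hx : x ∈ Ioi t <;> simp [hx]
  rw [cdf_eq_real, ← h, ← compl_Ioi, probReal_compl_eq_one_sub measurableSet_Ioi]

lemma level_mem {n : ℕ} (hn : 1 ≤ n) :
    0 < 1 - 1 / (2 * (n : ℝ)) ∧ 1 - 1 / (2 * (n : ℝ)) < 1 := by
  have hn' : (1 : ℝ) ≤ n := by exact_mod_cast hn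
  have h1 : 1 / (2 * (n : ℝ)) < 1 := by rw [div_lt_one (by linarith)]; linarith
  have h2 : 0 < 1 / (2 * (n : ℝ)) := by positivity
  constructor <;> linarith

lemma tendsto_gaussQuantile :
    Tendsto (fun n : ℕ => gaussQuantile (1 - 1 / (2 * (n : ℝ)))) atTop atTop := by
  refine tendsto_atTop.2 fun M => ?_
  have hM : cdf (gaussianReal 0 1) M < 1 := by
    rw [cdf_std_gaussian]
    have := gaussTail_pos (c := 1 / 2) (by norm_num) M
    have : 0 < (√(2 * Real.pi))⁻¹ * gaussTail (1 / 2) M := by positivity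
    linarith
  have hlim : Tendsto (fun n : ℕ => 1 - 1 / (2 * (n : ℝ))) atTop (nhds 1) := by
    have h : Tendsto (fun n : ℕ => 1 / (2 * (n : ℝ))) atTop (nhds 0) :=
      (tendsto_natCast_atTop_atTop.const_mul_atTop two_pos).const_div_atTop 1
    simpa using h.const_sub 1
  filter_upwards [hlim.eventually_const_lt hM, eventually_ge_atTop 1] with n hn hn1
  obtain ⟨h0, h1⟩ := level_mem hn1
  by_contra! hlt
  have := monotone_cdf (gaussianReal 0 1) hlt.le
  rw [cdf_gaussQuantile h0 h1] at this
  linarith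

/-! ### Expectations of `Z` -/

lemma density_mul (x : ℝ) :
    Real.exp (-(1 / 2) * x ^ 2) * (Real.exp (x ^ 2 / (8 / 3)) - 2) =
      Real.exp (-(1 / 8) * x ^ 2) - 2 * Real.exp (-(1 / 2) * x ^ 2) := by
  rw [mul_sub, ← Real.exp_add]
  ring_nf

/-- `E[Z 1(|X| > t)]` in terms of tail integrals. -/
lemma integral_tail {t : ℝ} (ht : 0 ≤ t) :
    ∫ x, {y : ℝ | t < |y|}.indicator (fun y => Real.exp (y ^ 2 / (8 / 3)) - 2) x
        ∂(gaussianReal 0 1) =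
      (√(2 * Real.pi))⁻¹ * (2 * (gaussTail (1 / 8) t - 2 * gaussTail (1 / 2) t)) := by
  rw [integral_std_gaussian]
  have h1 : ∀ x : ℝ, Real.exp (-(1 / 2) * x ^ 2) *
      {y : ℝ | t < |y|}.indicator (fun y => Real.exp (y ^ 2 / (8 / 3)) - 2) x =
      (Ioi t).indicator (fun y => Real.exp (-(1 / 8) * y ^ 2) - 2 * Real.exp (-(1 / 2) * y ^ 2))
        |x| := by
    intro x
    by_cases hx : t < |x|
    · rw [indicator_of_mem (by exact hx), indicator_of_mem (by exact hx), density_mul, sq_abs]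
    · rw [indicator_of_notMem (by exact hx), indicator_of_notMem (by exact hx), mul_zero]
  simp_rw [h1]
  rw [integral_comp_abs, setIntegral_indicator measurableSet_Ioi, Ioi_inter_Ioi, max_eq_right ht,
    integral_sub, integral_const_mul, gaussTail, gaussTail]
  · exact (integrable_exp_neg_mul_sq (by norm_num)).integrableOn
  · exact ((integrable_exp_neg_mul_sq (by norm_num)).const_mul 2).integrableOn

lemma integrable_Z :
    Integrable (fun y : ℝ => Real.exp (y ^ 2 / (8 / 3)) - 2) (gaussianReal 0 1) := by
  rw [gaussianReal_of_var_ne_zero 0 one_ne_zero,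
    integrable_withDensity_iff_integrable_smul₀' (by fun_prop)
      (Eventually.of_forall fun _ => gaussianPDF_lt_top)]
  have h : Integrable fun x : ℝ => (√(2 * Real.pi))⁻¹ *
      (Real.exp (-(1 / 8) * x ^ 2) - 2 * Real.exp (-(1 / 2) * x ^ 2)) :=
    ((integrable_exp_neg_mul_sq (by norm_num)).sub
      ((integrable_exp_neg_mul_sq (by norm_num)).const_mul 2)).const_mul _
  refine h.congr (Eventually.of_forall fun x => ?_)
  simp only [toReal_gaussianPDF, gaussianPDFReal, smul_eq_mul, NNReal.coe_one, mul_one, sub_zero]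
  rw [mul_assoc, show -x ^ 2 / 2 = -(1 / 2) * x ^ 2 by ring, density_mul]

lemma integral_Z :
    ∫ x, (Real.exp (x ^ 2 / (8 / 3)) - 2) ∂(gaussianReal 0 1) = 0 := by
  rw [integral_std_gaussian]
  simp_rw [density_mul]
  rw [integral_sub (integrable_exp_neg_mul_sq (by norm_num))
    ((integrable_exp_neg_mul_sq (by norm_num)).const_mul 2), integral_const_mul,
    integral_gaussian, integral_gaussian,
    show Real.pi / (1 / 8) = 2 ^ 2 * (Real.pi / (1 / 2)) by ring,
    Real.sqrt_mul (by norm_num : (0 : ℝ) ≤ 2 ^ 2) (Real.pi / (1 / 2)),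
    Real.sqrt_sq (by norm_num : (0 : ℝ) ≤ 2)]
  ring

/-- When `exp(3t²/8) - 2 ≥ 1`, only large positive values of `Z` exceed it in absolute value,
since `Z ≥ -1`. -/
lemma abs_Z_gt_iff {t : ℝ} (ht : 0 ≤ t) (ha : 3 ≤ Real.exp (3 / 8 * t ^ 2)) (y : ℝ) :
    Real.exp (3 / 8 * t ^ 2) - 2 < |Real.exp (y ^ 2 / (8 / 3)) - 2| ↔ t < |y| := by
  have h1 : 1 ≤ Real.exp (y ^ 2 / (8 / 3)) := Real.one_le_exp (by positivity)
  rw [lt_abs]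
  have h2 : t < |y| ↔ Real.exp (3 / 8 * t ^ 2) < Real.exp (y ^ 2 / (8 / 3)) := by
    rw [Real.exp_lt_exp, ← abs_of_nonneg ht, ← sq_lt_sq, abs_of_nonneg ht]
    constructor <;> intro h <;> linarith
  rw [h2]
  constructor
  · rintro (h | h) <;> linarith
  · intro h
    left
    linarith

/-! ### The limit -/

/-- The limit as a function of the quantile `t`. -/
lemma tendsto_ratio :
    Tendsto (fun t => (gaussTail (1 / 8) t / gaussTail (1 / 2) t - 2) /
      (Real.exp (3 / 8 * t ^ 2) - 2)) atTop (nhds 4) := by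
  have hr := (tendsto_mills_s16 (c := 1 / 8) (by norm_num)).div
    (tendsto_mills_s16 (c := 1 / 2) (by norm_num)) (by norm_num)
  have hu := (tendsto_exp_neg_mul_sq (c := 3 / 8) (by norm_num)).const_mul 2
  have h := (hr.sub hu).div (hu.const_sub 1) (by norm_num)
  norm_num only at h
  refine h.congr' ?_
  filter_upwards [eventually_gt_atTop 0] with t ht
  have hG := gaussTail_pos (c := 1 / 2) (by norm_num) t
  have he : Real.exp (1 / 2 * t ^ 2) = Real.exp (3 / 8 * t ^ 2) * Real.exp (1 / 8 * t ^ 2) := by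
    rw [← Real.exp_add]; ring_nf
  have hE := Real.exp_pos (3 / 8 * t ^ 2)
  have hE' := Real.exp_pos (1 / 8 * t ^ 2)
  have hneg : Real.exp (-(3 / 8) * t ^ 2) = (Real.exp (3 / 8 * t ^ 2))⁻¹ := by
    rw [← Real.exp_neg]; ring_nf
  simp only [Pi.div_apply]
  rw [hneg, he]
  -- Numerator and denominator are both multiplied by `exp(3t²/8)`.
  rw [← mul_div_mul_left _ _ hE.ne']
  congr 1 <;> field_simp

/-- For `Z = exp(X²/(8/3)) − 2` with `X` standard Gaussian:
`n E[Z 1(|Z| > a_n)]/a_n → 4`; equivalently the truncated-mean centering satisfies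
`b_n = n E[Z 1(|Z| ≤ a_n)] = −4 a_n (1 + o(1))`. -/
theorem gaussian_truncated_mean_asymptotics :
    Tendsto (fun n : ℕ =>
        (n : ℝ) * (∫ x, {y : ℝ | truncLevel n < |Real.exp (y ^ 2 / (8 / 3)) - 2|}.indicator
            (fun y => Real.exp (y ^ 2 / (8 / 3)) - 2) x ∂(gaussianReal 0 1)) / truncLevel n)
      atTop (nhds 4) ∧
    Tendsto (fun n : ℕ =>
        ((n : ℝ) * ∫ x, {y : ℝ | |Real.exp (y ^ 2 / (8 / 3)) - 2| ≤ truncLevel n}.indicator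
            (fun y => Real.exp (y ^ 2 / (8 / 3)) - 2) x ∂(gaussianReal 0 1)) /
          (-4 * truncLevel n))
      atTop (nhds 1) := by
  have hfirst : Tendsto (fun n : ℕ =>
      (n : ℝ) * (∫ x, {y : ℝ | truncLevel n < |Real.exp (y ^ 2 / (8 / 3)) - 2|}.indicator
          (fun y => Real.exp (y ^ 2 / (8 / 3)) - 2) x ∂(gaussianReal 0 1)) / truncLevel n)
      atTop (nhds 4) := by
    refine (tendsto_ratio.comp tendsto_gaussQuantile).congr' ?_
    have hexp : Tendsto (fun t : ℝ => Real.exp (3 / 8 * t ^ 2)) atTop atTop :=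
      Real.tendsto_exp_atTop.comp
        ((tendsto_pow_atTop two_ne_zero).const_mul_atTop (by norm_num))
    filter_upwards [eventually_ge_atTop 1, tendsto_gaussQuantile.eventually_ge_atTop 0,
      (hexp.comp tendsto_gaussQuantile).eventually_ge_atTop 3] with n hn ht ha
    obtain ⟨h0, h1⟩ := level_mem hn
    have hq := cdf_gaussQuantile h0 h1
    simp only [Function.comp_apply, truncLevel] at ha ⊢
    generalize gaussQuantile (1 - 1 / (2 * (n : ℝ))) = t at *
    rw [cdf_std_gaussian] at hq
    have hset : {y : ℝ | Real.exp (3 / 8 * t ^ 2) - 2 < |Real.exp (y ^ 2 / (8 / 3)) - 2|} =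
        {y : ℝ | t < |y|} := ext fun y => abs_Z_gt_iff ht ha y
    rw [hset, integral_tail ht]
    have hG := gaussTail_pos (c := 1 / 2) (by norm_num) t
    have hs : 0 < √(2 * Real.pi) := by positivity
    have hn0 : (0 : ℝ) < n := by exact_mod_cast hn
    -- The quantile equation, solved for `n`.
    have hnG : (n : ℝ) * ((√(2 * Real.pi))⁻¹ * 2) = (gaussTail (1 / 2) t)⁻¹ := by
      have : (√(2 * Real.pi))⁻¹ * gaussTail (1 / 2) t = 1 / (2 * (n : ℝ)) := by linarith
      refine eq_inv_of_mul_eq_one_left ?_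
      rw [show (n : ℝ) * ((√(2 * Real.pi))⁻¹ * 2) *
        gaussTail (1 / 2) t = 2 * n * ((√(2 * Real.pi))⁻¹ * gaussTail (1 / 2) t) by ring, this]
      field_simp
    rw [← mul_assoc (√(2 * Real.pi))⁻¹, ← mul_assoc (n : ℝ), hnG]
    congr 1
    field_simp
  refine ⟨hfirst, ?_⟩
  have h := hfirst.div_const 4
  rw [div_self (by norm_num : (4 : ℝ) ≠ 0)] at h
  refine h.congr fun n => ?_
  set f : ℝ → ℝ := fun y => Real.exp (y ^ 2 / (8 / 3)) - 2 with hf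
  have hmeas : MeasurableSet {y : ℝ | |Real.exp (y ^ 2 / (8 / 3)) - 2| ≤ truncLevel n} :=
    measurableSet_le (by fun_prop) measurable_const
  have hcompl : {y : ℝ | truncLevel n < |Real.exp (y ^ 2 / (8 / 3)) - 2|} =
      {y : ℝ | |Real.exp (y ^ 2 / (8 / 3)) - 2| ≤ truncLevel n}ᶜ := by
    ext y
    simp
  have hsum := integral_add_compl hmeas integrable_Z
  rw [integral_Z] at hsum
  rw [hcompl, integral_indicator hmeas.compl, integral_indicator hmeas,
    eq_neg_of_add_eq_zero_right hsum, neg_mul, div_neg, mul_neg, neg_div, neg_div, div_div,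
    mul_comm (truncLevel n)]
end
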